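/- Let U ⊆ ℝ^n be a nonempty open set and let f : U → ℝ be curve-rational. Then f is continuous on U and rational: there exist real polynomials p, q in n variables, q not the zero polynomial, such that f(x) = p(x)/q(x) for every x ∈ U with q(x) ≠ 0. (The main implication of Theorem 1.7 for open subsets of ℝ^n.) -/

import Mathlib

open MvPolynomial

/-- The set of real points of the subvariety of affine `n`-space defined by an ideal `I`
of the real polynomial ring. -/
def realPoints {n : ℕ} (I : Ideal (MvPolynomial (Fin n) ℝ)) : Set (Fin n → ℝ) :=
  {x | ∀ P ∈ I, eval x P = 0}

/-- `f : W → ℝ` is curve-rational: for every irreducible real algebraic curve in affine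
`n`-space (encoded by a prime ideal `I` with one-dimensional quotient), the restriction
of `f` to `W ∩ Z(I)` is continuous and rational on the curve. -/
def CurveRational {n : ℕ} (W : Set (Fin n → ℝ)) (f : (Fin n → ℝ) → ℝ) : Prop :=
  ∀ I : Ideal (MvPolynomial (Fin n) ℝ), I.IsPrime →
    ringKrullDim (MvPolynomial (Fin n) ℝ ⧸ I) = 1 →
    ContinuousOn f (W ∩ realPoints I) ∧
    ∃ p q : MvPolynomial (Fin n) ℝ, q ∉ I ∧
      ∀ x ∈ W ∩ realPoints I, eval x q ≠ 0 → f x = eval x p / eval x q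

/-!
*Rationality.* Restricted to a line, `f` is a continuous rational function of the parameter, hence
regular. On a box, a function that is regular in each variable separately is rational: by
uncountability the degrees in one variable are bounded on an uncountable set of values, and the
coefficients are then found by linear algebra. Regularity along the lines through a point of the
box carries the identity `Q * f = P` to all of `U`.

*Continuity.* If `f` is not continuous at `x₀`, then some polynomial `g` with `g x₀ ≤ 0` is positive
at points arbitrarily close to `x₀`, and only at points where `f` is far from `f x₀`. It remains to
find an algebraic curve through `x₀` along which `g` is positive arbitrarily close to `x₀`. Let `k`
be a countable field containing the coefficients of `g` and of `h = |x - x₀|²`, and let `a` be a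
linear form with coefficients algebraically independent over `k`. For small `r > 0`, a maximum
of `g * (r - h) * exp a` over `{h ≤ r}` is a critical point `x`, and the critical point equation
expresses each coefficient of `a` as a rational function over `k` of the `n + 1` quantities `r` and
`x i`. As `r → 0`, the germ of `x` along an ultrafilter therefore has transcendence degree at most
`(n + 1) - n = 1` over `ℝ`, so the polynomials vanishing at it form the prime ideal of a curve.
-/

open Filter Topology
open scoped Polynomial

section TranscendenceDegree

variable {k F K : Type*} [Field k] [Field F] [Field K] [Algebra k F] [Algebra k K] [Algebra F K]
  [IsScalarTower k F K]

theorem eRk_add_card_le_encard_of_mem_adjoin {ι : Type*} {a : ι → F}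
    (ha : AlgebraicIndependent k a) {S : Set K}
    (hS : ∀ i, algebraMap F K (a i) ∈ IntermediateField.adjoin k S) :
    (AlgebraicIndependent.matroid F K).eRk S + ENat.card ι ≤ S.encard := by
  obtain ⟨B, hB⟩ := (AlgebraicIndependent.matroid F K).exists_isBasis S
  have indep_F : AlgebraicIndependent F ((↑) : B → K) := hB.indep
  have indep_k : AlgebraicIndependent k (Sum.elim ((↑) : B → K) (algebraMap F K ∘ a)) :=
    ha.sumElim_comp indep_F
  have range_subset : Set.range (Sum.elim ((↑) : B → K) (algebraMap F K ∘ a)) ⊆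
      (AlgebraicIndependent.matroid k K).closure S := by
    rw [AlgebraicIndependent.matroid_closure_eq]
    rintro _ ⟨b | i, rfl⟩
    · exact isAlgebraic_algebraMap
        (⟨b, Algebra.subset_adjoin (hB.subset b.2)⟩ : Algebra.adjoin k S)
    · open scoped IntermediateField.algebraAdjoinAdjoin in
      exact (IsFractionRing.isAlgebraic_iff (Algebra.adjoin k S) (IntermediateField.adjoin k S)
        K).2 (isAlgebraic_algebraMap (⟨_, hS i⟩ : IntermediateField.adjoin k S))
  calc (AlgebraicIndependent.matroid F K).eRk S + ENat.card ι
      = (Set.range (Sum.elim ((↑) : B → K) (algebraMap F K ∘ a))).encard := by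
        rw [← Set.image_univ, indep_k.injective.injOn.encard_image, Set.encard_univ,
          ENat.card_sum, ← hB.encard_eq_eRk, ENat.card_coe_set_eq]
    _ ≤ (AlgebraicIndependent.matroid k K).eRk S :=
        (Matroid.Indep.encard_le_eRk_of_subset indep_k.to_subtype_range range_subset).trans_eq
          (Matroid.eRk_closure_eq _ _)
    _ ≤ S.encard := Matroid.eRk_le_encard _ _

theorem ringKrullDim_le_of_isIntegral {R S : Type*} [CommRing R] [CommRing S]
    (f : R →+* S) (hf : f.IsIntegral) : ringKrullDim S ≤ ringKrullDim R := by
  algebraize [f]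
  exact Order.krullDim_le_of_strictMono (PrimeSpectrum.comap f)
    fun p q hpq => Ideal.IsIntegral.comap_lt_comap (R := R) hpq

theorem ringKrullDim_quotient_ker_aeval_le_eRk {σ : Type*} [Finite σ] (y : σ → K) :
    ringKrullDim (MvPolynomial σ F ⧸ RingHom.ker (aeval y : MvPolynomial σ F →ₐ[F] K)) ≤
      (AlgebraicIndependent.matroid F K).eRk (Set.range y) := by
  set φ : MvPolynomial σ F →ₐ[F] K := aeval y with φ_def
  have : Nontrivial (MvPolynomial σ F ⧸ RingHom.ker φ) :=
    Ideal.Quotient.nontrivial_iff.2 (RingHom.ker_ne_top φ)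
  obtain ⟨s, g, g_injective, g_integral⟩ :=
    exists_integral_inj_algHom_of_fg F (MvPolynomial σ F ⧸ RingHom.ker φ)
  let e : MvPolynomial (Fin s) F →ₐ[F] K := (Ideal.kerLiftAlg φ).comp g
  have e_indep : AlgebraicIndependent F (e ∘ X) :=
    (algebraicIndependent_X (Fin s) F).map' ((Ideal.kerLiftAlg_injective φ).comp g_injective)
  have e_mem_closure : Set.range (e ∘ X) ⊆
      (AlgebraicIndependent.matroid F K).closure (Set.range y) := by
    rw [AlgebraicIndependent.matroid_closure_eq]
    rintro _ ⟨i, rfl⟩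
    obtain ⟨P, hP⟩ := Ideal.Quotient.mk_surjective (g (X i))
    have mem_adjoin : e (X i) ∈ Algebra.adjoin F (Set.range y) := by
      rw [Algebra.adjoin_range_eq_range_aeval]
      exact ⟨P, by simp [e, ← hP, φ_def]⟩
    exact isAlgebraic_algebraMap (⟨_, mem_adjoin⟩ : Algebra.adjoin F (Set.range y))
  have card_le : (s : ℕ∞) ≤ (AlgebraicIndependent.matroid F K).eRk (Set.range y) :=
    calc (s : ℕ∞) = (Set.range (e ∘ X)).encard := by
          rw [← Set.image_univ, e_indep.injective.injOn.encard_image]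
          simp
      _ ≤ (AlgebraicIndependent.matroid F K).eRk (Set.range y) :=
          (Matroid.Indep.encard_le_eRk_of_subset e_indep.to_subtype_range e_mem_closure).trans_eq
            (Matroid.eRk_closure_eq _ _)
  calc ringKrullDim (MvPolynomial σ F ⧸ RingHom.ker φ)
      ≤ ringKrullDim (MvPolynomial (Fin s) F) :=
        ringKrullDim_le_of_isIntegral g.toRingHom g_integral
    _ = s := by simp [MvPolynomial.ringKrullDim_of_isNoetherianRing]
    _ ≤ _ := by exact_mod_cast card_le

theorem ringKrullDim_quotient_ker_aeval_le_one {σ : Type*} [Finite σ] {a : σ → F}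
    (ha : AlgebraicIndependent k a) (y : σ → K) (ρ : K)
    (hy : ∀ i, algebraMap F K (a i) ∈ IntermediateField.adjoin k (insert ρ (Set.range y))) :
    ringKrullDim (MvPolynomial σ F ⧸ RingHom.ker (aeval y : MvPolynomial σ F →ₐ[F] K)) ≤ 1 := by
  have eRk_add_le : (AlgebraicIndependent.matroid F K).eRk (Set.range y) + ENat.card σ ≤
      1 + ENat.card σ :=
    calc (AlgebraicIndependent.matroid F K).eRk (Set.range y) + ENat.card σ
        ≤ (AlgebraicIndependent.matroid F K).eRk (insert ρ (Set.range y)) + ENat.card σ := by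
          gcongr
          exact Matroid.eRk_mono _ (Set.subset_insert _ _)
      _ ≤ (insert ρ (Set.range y)).encard := eRk_add_card_le_encard_of_mem_adjoin ha hy
      _ ≤ (Set.range y).encard + 1 := Set.encard_insert_le _ _
      _ ≤ 1 + ENat.card σ := by
          rw [add_comm, ← Set.image_univ, ← Set.encard_univ]
          gcongr
          exact Set.encard_image_le _ _
  have eRk_le_one : (AlgebraicIndependent.matroid F K).eRk (Set.range y) ≤ 1 :=
    (ENat.add_le_add_iff_right (by simpa using ‹Finite σ›)).1 eRk_add_le
  exact (ringKrullDim_quotient_ker_aeval_le_eRk y).trans (by exact_mod_cast eRk_le_one)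

theorem exists_algebraicIndependent_nat (k F : Type*) [Field k] [Field F] [Algebra k F]
    [Countable k] [Uncountable F] : ∃ a : ℕ → F, AlgebraicIndependent k a := by
  obtain ⟨s, hs⟩ := exists_isTranscendenceBasis k F
  have s_infinite : Infinite s := by
    by_contra s_finite
    rw [not_infinite_iff_finite] at s_finite
    have : Algebra.IsAlgebraic (Algebra.adjoin k (Set.range ((↑) : s → F))) F := hs.isAlgebraic
    have : Countable (Algebra.adjoin k (Set.range ((↑) : s → F))) := by
      rw [← Cardinal.mk_le_aleph0_iff, ← Cardinal.lift_le_aleph0]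
      refine (Algebra.lift_cardinalMk_adjoin_le k _).trans ?_
      simp
    have all_algebraic := Algebraic.countable (Algebra.adjoin k (Set.range ((↑) : s → F))) F
    simp [Algebra.IsAlgebraic.isAlgebraic, Set.countable_univ_iff] at all_algebraic
  exact ⟨_, hs.1.comp _ (Infinite.natEmbedding s).injective⟩

end TranscendenceDegree

theorem exists_countable_subfield_subset_range_map {σ F : Type*} [Field F]
    {T : Set (MvPolynomial σ F)} (hT : T.Countable) :
    ∃ k : Subfield F, Countable k ∧ T ⊆ Set.range (map (σ := σ) (algebraMap k F)) := by
  classical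
  let k := Subfield.closure (⋃ g ∈ T, (g.coeffs : Set F))
  have coeffs_countable : (⋃ g ∈ T, (g.coeffs : Set F)).Countable :=
    hT.biUnion fun g _ => g.coeffs.countable_toSet
  have k_countable : Countable k := by
    rw [← Cardinal.mk_le_aleph0_iff]
    exact (Subfield.cardinalMk_closure_le_max _).trans (max_le coeffs_countable.le_aleph0 le_rfl)
  refine ⟨k, k_countable, fun g hg => mem_range_map_iff_coeffs_subset.2 fun c hc => ?_⟩
  exact ⟨⟨c, Subfield.subset_closure (Set.mem_biUnion hg hc)⟩, rfl⟩

section VanishingAlong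

variable {ι σ : Type*}

/-- The ideal of polynomials vanishing at `x m` for `l`-almost all `m`. When `l` is an ultrafilter
it is the vanishing ideal of the point of the ultrapower whose coordinates are the germs of
those of `x`. -/
def idealVanishingAlong {R : Type*} [CommRing R] (l : Filter ι) (x : ι → σ → R) :
    Ideal (MvPolynomial σ R) where
  carrier := {P | ∀ᶠ m in l, eval (x m) P = 0}
  add_mem' hP hQ := by filter_upwards [hP, hQ] with m hPm hQm; simp [hPm, hQm]
  zero_mem' := by simp
  smul_mem' P Q hQ := by filter_upwards [hQ] with m hQm; simp [hQm]

theorem mem_idealVanishingAlong {R : Type*} [CommRing R] {l : Filter ι} {x : ι → σ → R}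
    {P : MvPolynomial σ R} : P ∈ idealVanishingAlong l x ↔ ∀ᶠ m in l, eval (x m) P = 0 :=
  Iff.rfl

theorem isPrime_idealVanishingAlong {R : Type*} [CommRing R] [IsDomain R] (l : Ultrafilter ι)
    (x : ι → σ → R) : (idealVanishingAlong (l : Filter ι) x).IsPrime := by
  refine Ideal.isPrime_iff.2 ⟨?_, fun {P Q} hPQ => ?_⟩
  · rw [Ideal.ne_top_iff_one]
    simp [mem_idealVanishingAlong, l.neBot.ne]
  · simpa [mem_idealVanishingAlong, Ultrafilter.eventually_or] using hPQ

theorem eventually_mem_realPoints_idealVanishingAlong {n : ℕ} (l : Filter ι)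
    (x : ι → Fin n → ℝ) : ∀ᶠ m in l, x m ∈ realPoints (idealVanishingAlong l x) := by
  obtain ⟨S, hS⟩ := (IsNoetherian.noetherian (idealVanishingAlong l x) : Ideal.FG _)
  have vanish_on_generators : ∀ᶠ m in l, ∀ P ∈ S, eval (x m) P = 0 :=
    (eventually_all_finset S).2 fun P hP => mem_idealVanishingAlong.1 (hS ▸ Ideal.subset_span hP)
  filter_upwards [vanish_on_generators] with m hm
  have ideal_le : idealVanishingAlong l x ≤ RingHom.ker (eval (x m)) :=
    hS ▸ Ideal.span_le.2 hm
  exact fun P hP => ideal_le hP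

theorem isClosed_realPoints {n : ℕ} (I : Ideal (MvPolynomial (Fin n) ℝ)) :
    IsClosed (realPoints I) := by
  have : realPoints I = ⋂ P ∈ I, {x | eval x P = 0} := by ext; simp [realPoints]
  rw [this]
  exact isClosed_biInter fun P _ => isClosed_eq (continuous_eval P) continuous_const

/-- The algebra structure on germs along `l` given by the germs of constant functions. It exhibits
an ultrapower of a field as an extension of that field. -/
abbrev germAlgebra {R A : Type*} [CommSemiring R] [CommSemiring A] [Algebra R A]
    (l : Filter ι) : Algebra R (Germ l A) where
  algebraMap := (Germ.coeRingHom l).comp (algebraMap R (ι → A))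
  commutes' _ _ := mul_comm _ _
  smul_def' _ f := Germ.inductionOn f fun _ =>
    congrArg Germ.ofFun (funext fun _ => Algebra.smul_def _ _)

attribute [local instance] germAlgebra

theorem aeval_germ {R A : Type*} [CommSemiring R] [CommSemiring A] [Algebra R A] (l : Filter ι)
    (x : ι → σ → A) (P : MvPolynomial σ R) :
    aeval (fun i => ((fun m => x m i : ι → A) : Germ l A)) P =
      ((fun m => aeval (x m) P : ι → A) : Germ l A) := by
  induction P using MvPolynomial.induction_on with
  | C r => simp only [algHom_C]; rfl
  | add p q hp hq => simp only [map_add, hp, hq]; rfl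
  | mul_X p i hp => simp only [map_mul, hp, aeval_X]; rfl

theorem ker_aeval_germ {R : Type*} [CommRing R] (l : Filter ι) (x : ι → σ → R) :
    RingHom.ker (aeval (R := R) fun i => ((fun m => x m i : ι → R) : Germ l R)) =
      idealVanishingAlong l x := by
  ext P
  rw [RingHom.mem_ker, aeval_germ, mem_idealVanishingAlong]
  exact Germ.coe_eq

theorem ringKrullDim_idealVanishingAlong_le_one [Finite σ] {k F : Type*} [Field k] [Field F]
    [Algebra k F] {a : σ → F} (ha : AlgebraicIndependent k a) (g h : MvPolynomial σ k)
    (l : Ultrafilter ι) (x : ι → σ → F) (r : ι → F)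
    (hx : ∀ m i, a i = aeval (x m) (pderiv i h) / (r m - aeval (x m) h) -
      aeval (x m) (pderiv i g) / aeval (x m) g) :
    ringKrullDim (MvPolynomial σ F ⧸ idealVanishingAlong (l : Filter ι) x) ≤ 1 := by
  let y : σ → Germ (l : Filter ι) F := fun i => ((fun m => x m i : ι → F) : Germ (l : Filter ι) F)
  let ρ : Germ (l : Filter ι) F := r
  have : IsScalarTower k F (Germ (l : Filter ι) F) := IsScalarTower.of_algebraMap_eq fun _ => rfl
  have aeval_y (P : MvPolynomial σ k) :
      aeval y P = ((fun m => aeval (x m) P : ι → F) : Germ (l : Filter ι) F) :=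
    aeval_germ _ x P
  have germ_eq (i : σ) : algebraMap F (Germ (l : Filter ι) F) (a i) =
      aeval y (pderiv i h) / (ρ - aeval y h) - aeval y (pderiv i g) / aeval y g := by
    simp only [aeval_y]
    exact congrArg Germ.ofFun (funext fun m => hx m i)
  have aeval_mem (P : MvPolynomial σ k) :
      aeval y P ∈ IntermediateField.adjoin k (insert ρ (Set.range y)) := by
    have : aeval y P ∈ Algebra.adjoin k (Set.range y) := by
      rw [Algebra.adjoin_range_eq_range_aeval]
      exact ⟨P, rfl⟩
    exact IntermediateField.algebra_adjoin_le_adjoin _ _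
      (Algebra.adjoin_mono (Set.subset_insert _ _) this)
  have ρ_mem : ρ ∈ IntermediateField.adjoin k (insert ρ (Set.range y)) :=
    IntermediateField.subset_adjoin _ _ (Set.mem_insert _ _)
  rw [← ker_aeval_germ]
  refine ringKrullDim_quotient_ker_aeval_le_one ha y ρ fun i => ?_
  rw [germ_eq]
  exact sub_mem (div_mem (aeval_mem _) (sub_mem ρ_mem (aeval_mem _)))
    (div_mem (aeval_mem _) (aeval_mem _))

end VanishingAlong

theorem one_le_ringKrullDim_of_mem_realPoints_of_ne {n : ℕ} {I : Ideal (MvPolynomial (Fin n) ℝ)}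
    (hI : I.IsPrime) {x y : Fin n → ℝ} (hx : x ∈ realPoints I) (hy : y ∈ realPoints I)
    (hxy : x ≠ y) : 1 ≤ ringKrullDim (MvPolynomial (Fin n) ℝ ⧸ I) := by
  by_contra hlt
  have dim_le_zero : Ring.KrullDimLE 0 (MvPolynomial (Fin n) ℝ ⧸ I) := by
    rw [Ring.krullDimLE_iff]
    exact ENat.WithBot.lt_add_one_iff.1 (by simpa using hlt)
  have hmax : I.IsMaximal :=
    Ideal.Quotient.maximal_of_isField _ Ring.KrullDimLE.isField_of_isDomain
  have eq_ker : I = RingHom.ker (eval x) :=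
    hmax.eq_of_le (RingHom.ker_ne_top _) fun P hP => hx P hP
  refine hxy (funext fun i => ?_)
  have hXi : X i - C (x i) ∈ I := by simp [eq_ker, RingHom.mem_ker]
  simpa [sub_eq_zero, eq_comm] using hy _ hXi

section CriticalPoints

theorem hasFDerivAt_eval {σ 𝕜 : Type*} [Fintype σ] [NontriviallyNormedField 𝕜]
    (g : MvPolynomial σ 𝕜) (x : σ → 𝕜) :
    HasFDerivAt (fun z => eval z g)
      (∑ i, eval x (pderiv i g) • ContinuousLinearMap.proj (R := 𝕜) (φ := fun _ => 𝕜) i) x := by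
  classical
  induction g using MvPolynomial.induction_on with
  | C a =>
    simp only [eval_C]
    refine (hasFDerivAt_const a x).congr_fderiv ?_
    ext v
    simp
  | add p q hp hq =>
    simp only [map_add]
    refine (hp.fun_add hq).congr_fderiv ?_
    ext v
    simp [add_mul, Finset.sum_add_distrib]
  | mul_X p j hp =>
    simp only [map_mul, eval_X]
    refine (hp.fun_mul (hasFDerivAt_apply j x)).congr_fderiv ?_
    ext v
    simp [pderiv_X, Pi.single_apply, add_mul, Finset.sum_add_distrib, Finset.mul_sum, mul_assoc,
      apply_ite (eval x)]

/-- The point `x` is a maximum of `G * exp ∘ ℓ` over `S`. -/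
theorem exists_hasFDerivAt_eq_neg_smul {E : Type*} [NormedAddCommGroup E] [NormedSpace ℝ E]
    {G : E → ℝ} {G' : E → E →L[ℝ] ℝ} (hG : ∀ x, HasFDerivAt G (G' x) x) (ℓ : E →L[ℝ] ℝ)
    {S : Set E} (hS : IsCompact S) (hpos : ∃ y ∈ S, 0 < G y)
    (hbdry : ∀ z ∈ S, 0 < G z → S ∈ 𝓝 z) :
    ∃ x ∈ S, 0 < G x ∧ G' x = -(G x • ℓ) := by
  obtain ⟨y, hyS, hy⟩ := hpos
  have hcont : Continuous fun z => G z * Real.exp (ℓ z) :=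
    (continuous_iff_continuousAt.2 fun z => (hG z).continuousAt).mul (by fun_prop)
  obtain ⟨x, hxS, hmax⟩ := hS.exists_isMaxOn ⟨y, hyS⟩ hcont.continuousOn
  have hx : 0 < G x := by
    have : 0 < G x * Real.exp (ℓ x) :=
      (mul_pos hy (Real.exp_pos (ℓ y))).trans_le (hmax hyS)
    exact pos_of_mul_pos_left this (Real.exp_pos _).le
  have hderiv := (hG x).mul (ℓ.hasFDerivAt (x := x)).exp
  have hzero := (hmax.isLocalMax (hbdry x hxS hx)).hasFDerivAt_eq_zero hderiv
  refine ⟨x, hxS, hx, ?_⟩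
  have : Real.exp (ℓ x) • (G' x + G x • ℓ) = 0 := by
    rw [← hzero]; module
  exact eq_neg_of_add_eq_zero_left ((smul_eq_zero.1 this).resolve_left (Real.exp_pos _).ne')

theorem exists_eq_pderiv_div_sub_pderiv_div {σ : Type*} [Finite σ] (g h : MvPolynomial σ ℝ)
    {r : ℝ} (hcompact : IsCompact {x | eval x h ≤ r}) (hpos : ∃ x, eval x h < r ∧ 0 < eval x g)
    (a : σ → ℝ) :
    ∃ x, eval x h < r ∧ 0 < eval x g ∧ ∀ i,
      a i = eval x (pderiv i h) / (r - eval x h) - eval x (pderiv i g) / eval x g := by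
  classical
  have := Fintype.ofFinite σ
  obtain ⟨y, hyr, hyg⟩ := hpos
  have lt_of_pos : ∀ z ∈ {x | eval x h ≤ r}, 0 < eval z (g * (C r - h)) → eval z h < r := by
    intro z hz hGz
    refine lt_of_le_of_ne hz fun heq => ?_
    simp [heq] at hGz
  obtain ⟨x, hx, hGx, hderiv⟩ := exists_hasFDerivAt_eq_neg_smul
    (hasFDerivAt_eval (g * (C r - h)))
    (∑ i, a i • ContinuousLinearMap.proj (R := ℝ) (φ := fun _ => ℝ) i) hcompact
    ⟨y, hyr.le, by simpa using mul_pos hyg (sub_pos.2 hyr)⟩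
    fun z hz hGz => mem_of_superset
      ((isOpen_lt (continuous_eval h) continuous_const).mem_nhds (lt_of_pos z hz hGz))
      fun w (hw : eval w h < r) => hw.le
  have hxr : 0 < r - eval x h := sub_pos.2 (lt_of_pos x hx hGx)
  have hxg : 0 < eval x g := by
    simp only [map_mul, map_sub, eval_C] at hGx
    exact pos_of_mul_pos_left hGx hxr.le
  refine ⟨x, sub_pos.1 hxr, hxg, fun i => ?_⟩
  have hi := DFunLike.congr_fun hderiv (Pi.single i 1)
  simp only [Derivation.leibniz, map_sub, derivation_C, zero_sub, smul_eq_mul, mul_neg, map_add,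
    map_neg, map_mul, eval_C, sum_apply, smul_apply, ContinuousLinearMap.proj_apply,
    Pi.single_apply, mul_ite, mul_one, mul_zero, Finset.sum_ite_eq', Finset.mem_univ, ↓reduceIte,
    neg_apply] at hi
  rw [div_sub_div _ _ hxr.ne' hxg.ne', eq_div_iff (mul_pos hxr hxg).ne']
  linear_combination hi

end CriticalPoints

section CurveSelection

theorem eval_sum_X_sub_C_sq {σ R : Type*} [Fintype σ] [CommRing R] (x₀ x : σ → R) :
    eval x (∑ i, (X i - C (x₀ i)) ^ 2) = ∑ i, (x i - x₀ i) ^ 2 := by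
  simp

theorem abs_apply_sub_le_sqrt_of_sum_sq_le {σ : Type*} [Fintype σ] {x₀ x : σ → ℝ} {r : ℝ}
    (h : ∑ i, (x i - x₀ i) ^ 2 ≤ r) (i : σ) : |x i - x₀ i| ≤ √r :=
  Real.abs_le_sqrt <|
    (Finset.single_le_sum (fun j _ => sq_nonneg (x j - x₀ j)) (Finset.mem_univ i)).trans h

theorem isCompact_setOf_sum_sq_sub_le {σ : Type*} [Fintype σ] (x₀ : σ → ℝ) (r : ℝ) :
    IsCompact {x : σ → ℝ | ∑ i, (x i - x₀ i) ^ 2 ≤ r} := by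
  refine (isCompact_closedBall x₀ √r).of_isClosed_subset
    (isClosed_le (by fun_prop) continuous_const) fun x hx => ?_
  exact (dist_pi_le_iff (Real.sqrt_nonneg r)).2 fun i => abs_apply_sub_le_sqrt_of_sum_sq_le hx i

theorem tendsto_of_sum_sq_sub_le {ι σ : Type*} [Fintype σ] {l : Filter ι} {x₀ : σ → ℝ}
    {x : ι → σ → ℝ} {r : ι → ℝ} (hx : ∀ m, ∑ i, (x m i - x₀ i) ^ 2 ≤ r m)
    (hr : Tendsto r l (𝓝 0)) : Tendsto x l (𝓝 x₀) := by
  have hsqrt : Tendsto (fun m => √(r m)) l (𝓝 0) := by simpa using hr.sqrt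
  exact tendsto_pi_nhds.2 fun i => tendsto_iff_dist_tendsto_zero.2 <|
    squeeze_zero (fun _ => dist_nonneg)
      (fun m => abs_apply_sub_le_sqrt_of_sum_sq_le (hx m) i) hsqrt

theorem exists_tendsto_ringKrullDim_idealVanishingAlong_le_one {σ : Type*} [Finite σ]
    (g : MvPolynomial σ ℝ) {x₀ : σ → ℝ} (hg : ∃ᶠ x in 𝓝 x₀, 0 < eval x g) :
    ∃ x : ℕ → σ → ℝ, Tendsto x atTop (𝓝 x₀) ∧ (∀ m, 0 < eval (x m) g) ∧
      ∀ l : Ultrafilter ℕ,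
        ringKrullDim (MvPolynomial σ ℝ ⧸ idealVanishingAlong (l : Filter ℕ) x) ≤ 1 := by
  have := Fintype.ofFinite σ
  let h : MvPolynomial σ ℝ := ∑ i, (X i - C (x₀ i)) ^ 2
  have eval_h (x : σ → ℝ) : eval x h = ∑ i, (x i - x₀ i) ^ 2 := eval_sum_X_sub_C_sq x₀ x
  obtain ⟨k, k_countable, hk⟩ :=
    exists_countable_subfield_subset_range_map (Set.toFinite {g, h}).countable
  obtain ⟨g', hg'⟩ := hk (Set.mem_insert g {h})
  obtain ⟨h', hh'⟩ := hk (Set.mem_insert_of_mem g rfl)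
  obtain ⟨b, hb⟩ := exists_algebraicIndependent_nat k ℝ
  let a : σ → ℝ := b ∘ Fin.val ∘ Fintype.equivFin σ
  have ha : AlgebraicIndependent k a :=
    hb.comp _ (Fin.val_injective.comp (Fintype.equivFin σ).injective)
  have exists_pos (m : ℕ) : ∃ x, eval x h < 1 / ((m : ℝ) + 1) ∧ 0 < eval x g := by
    have near : ∀ᶠ x in 𝓝 x₀, eval x h < 1 / ((m : ℝ) + 1) :=
      (continuous_eval h).continuousAt.eventually_lt continuousAt_const
        (by simpa [eval_h] using by positivity)
    exact (near.and_frequently hg).exists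
  choose x hx_near hx_pos hx using fun m => exists_eq_pderiv_div_sub_pderiv_div g h
    (by simpa only [eval_h] using isCompact_setOf_sum_sq_sub_le x₀ _) (exists_pos m) a
  refine ⟨x, tendsto_of_sum_sq_sub_le (fun m => (eval_h (x m)).symm.trans_le (hx_near m).le)
    tendsto_one_div_add_atTop_nhds_zero_nat, hx_pos, fun l => ?_⟩
  refine ringKrullDim_idealVanishingAlong_le_one ha g' h' l x (fun m => 1 / ((m : ℝ) + 1))
    fun m i => (hx m i).trans ?_
  have aeval_eq (P : MvPolynomial σ k) : aeval (x m) P = eval (x m) (map (algebraMap k ℝ) P) :=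
    (eval_map ..).symm
  simp only [aeval_eq, ← pderiv_map, hg', hh']

theorem exists_curve_frequently_pos {n : ℕ} (g : MvPolynomial (Fin n) ℝ) {x₀ : Fin n → ℝ}
    (hx₀ : eval x₀ g ≤ 0) (hg : ∃ᶠ x in 𝓝 x₀, 0 < eval x g) :
    ∃ I : Ideal (MvPolynomial (Fin n) ℝ), I.IsPrime ∧
      ringKrullDim (MvPolynomial (Fin n) ℝ ⧸ I) = 1 ∧ x₀ ∈ realPoints I ∧
      ∃ᶠ x in 𝓝 x₀, x ∈ realPoints I ∧ 0 < eval x g := by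
  obtain ⟨x, hx, hx_pos, dim_le⟩ := exists_tendsto_ringKrullDim_idealVanishingAlong_le_one g hg
  let l := hyperfilter ℕ
  let I := idealVanishingAlong (l : Filter ℕ) x
  have hI : I.IsPrime := isPrime_idealVanishingAlong l x
  have hxl : Tendsto x l (𝓝 x₀) := hx.mono_left Nat.hyperfilter_le_atTop
  have x_mem : ∀ᶠ m in (l : Filter ℕ), x m ∈ realPoints I :=
    eventually_mem_realPoints_idealVanishingAlong _ x
  have x₀_mem : x₀ ∈ realPoints I := (isClosed_realPoints I).mem_of_tendsto hxl x_mem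
  obtain ⟨m, hm⟩ := x_mem.exists
  have x_ne : x m ≠ x₀ := fun heq => (hx_pos m).not_ge (heq ▸ hx₀)
  refine ⟨I, hI, le_antisymm (dim_le l) ?_, x₀_mem, ?_⟩
  · exact one_le_ringKrullDim_of_mem_realPoints_of_ne hI hm x₀_mem x_ne
  · exact hxl.frequently (x_mem.mono fun m hm => ⟨hm, hx_pos m⟩).frequently

end CurveSelection

section Lines

/-- The restriction of a polynomial to the parametrized line `t ↦ x + t • v`. Its kernel is the
ideal encoding that line. -/
noncomputable def lineRestrict {σ R : Type*} [CommSemiring R] (x v : σ → R) :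
    MvPolynomial σ R →ₐ[R] R[X] :=
  aeval fun i => Polynomial.C (x i) + Polynomial.C (v i) * Polynomial.X

theorem eval_lineRestrict {σ R : Type*} [CommSemiring R] (x v : σ → R) (P : MvPolynomial σ R)
    (t : R) : (lineRestrict x v P).eval t = eval (x + t • v) P := by
  induction P using MvPolynomial.induction_on with
  | C a => simp [lineRestrict]
  | add p q hp hq => simp [hp, hq]
  | mul_X p i hp =>
    rw [map_mul, Polynomial.eval_mul, hp]
    simp [lineRestrict, mul_comm t]

theorem lineRestrict_surjective {σ 𝕜 : Type*} [Field 𝕜] (x : σ → 𝕜) {v : σ → 𝕜} (hv : v ≠ 0) :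
    Function.Surjective (lineRestrict x v) := by
  obtain ⟨i, hi⟩ := Function.ne_iff.1 hv
  have parameter : lineRestrict x v (C (v i)⁻¹ * (X i - C (x i))) = Polynomial.X := by
    simp only [lineRestrict, map_mul, map_sub, aeval_X, algHom_C, Polynomial.algebraMap_eq,
      add_sub_cancel_left]
    rw [← mul_assoc, ← Polynomial.C_mul, inv_mul_cancel₀ hi, Polynomial.C_1, one_mul]
  refine fun p => ⟨Polynomial.aeval (C (v i)⁻¹ * (X i - C (x i))) p, ?_⟩
  rw [← Polynomial.aeval_algHom_apply, parameter, Polynomial.aeval_X_left_apply]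

theorem ringKrullDim_quotient_ker_lineRestrict {σ 𝕜 : Type*} [Field 𝕜] (x : σ → 𝕜) {v : σ → 𝕜}
    (hv : v ≠ 0) : ringKrullDim (MvPolynomial σ 𝕜 ⧸ RingHom.ker (lineRestrict x v)) = 1 := by
  rw [ringKrullDim_eq_of_ringEquiv
    (Ideal.quotientKerAlgEquivOfSurjective (lineRestrict_surjective x hv)).toRingEquiv,
    Polynomial.ringKrullDim_of_isNoetherianRing, ringKrullDim_eq_zero_of_field, zero_add]

theorem mem_realPoints_ker_lineRestrict {n : ℕ} (x v : Fin n → ℝ) (t : ℝ) :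
    x + t • v ∈ realPoints (RingHom.ker (lineRestrict x v)) := fun P hP => by
  rw [← eval_lineRestrict, RingHom.mem_ker.1 hP, Polynomial.eval_zero]

theorem exists_eq_div_on_line_of_curveRational {n : ℕ} {U : Set (Fin n → ℝ)}
    {f : (Fin n → ℝ) → ℝ} (hf : CurveRational U f) (x v : Fin n → ℝ) (hv : v ≠ 0) :
    ∃ p q : ℝ[X], q ≠ 0 ∧
      ∀ t, x + t • v ∈ U → q.eval t ≠ 0 → f (x + t • v) = p.eval t / q.eval t := by
  obtain ⟨-, p, q, hq, hpq⟩ :=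
    hf _ (RingHom.ker_isPrime _) (ringKrullDim_quotient_ker_lineRestrict x hv)
  refine ⟨lineRestrict x v p, lineRestrict x v q, hq, fun t ht hqt => ?_⟩
  rw [eval_lineRestrict] at hqt ⊢
  rw [eval_lineRestrict]
  exact hpq _ ⟨ht, mem_realPoints_ker_lineRestrict x v t⟩ hqt

end Lines

section RegularFunctions

/-- `f` is a quotient of two polynomials whose denominator does not vanish on `T`. -/
def IsRegularOn {𝕜 : Type*} [Field 𝕜] (f : 𝕜 → 𝕜) (T : Set 𝕜) : Prop :=
  ∃ p q : 𝕜[X], ∀ t ∈ T, q.eval t ≠ 0 ∧ q.eval t * f t = p.eval t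

theorem isRegularOn_const {𝕜 : Type*} [Field 𝕜] (c : 𝕜) (T : Set 𝕜) :
    IsRegularOn (fun _ => c) T :=
  ⟨Polynomial.C c, 1, by simp⟩

theorem IsRegularOn.mono {𝕜 : Type*} [Field 𝕜] {f : 𝕜 → 𝕜} {S T : Set 𝕜}
    (hf : IsRegularOn f T) (hST : S ⊆ T) : IsRegularOn f S :=
  let ⟨p, q, hpq⟩ := hf
  ⟨p, q, fun t ht => hpq t (hST ht)⟩

theorem eventually_eval_ne_zero {R : Type*} [CommRing R] [IsDomain R] [TopologicalSpace R]
    [T1Space R] {q : R[X]} (hq : q ≠ 0) (t : R) : ∀ᶠ s in 𝓝[≠] t, q.eval s ≠ 0 :=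
  nhdsNE_le_cofinite t (Polynomial.finite_setOfPred_isRoot hq).compl_mem_cofinite

variable {𝕜 : Type*} [NontriviallyNormedField 𝕜] {f : 𝕜 → 𝕜} {T : Set 𝕜}

theorem eval_mul_eq_eval_of_eval_ne_zero (hT : IsOpen T) (hf : ContinuousOn f T) {p q d : 𝕜[X]}
    (hd : d ≠ 0) (h : ∀ t ∈ T, d.eval t ≠ 0 → q.eval t * f t = p.eval t) {t : 𝕜} (ht : t ∈ T) :
    q.eval t * f t = p.eval t := by
  have agree : ∀ᶠ s in 𝓝[≠] t, q.eval s * f s = p.eval s := by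
    filter_upwards [eventually_eval_ne_zero hd t, nhdsWithin_le_nhds (hT.mem_nhds ht)]
      with s hds hsT using h s hsT hds
  have left_cont : ContinuousAt (fun s => q.eval s * f s) t :=
    q.continuousAt.mul (hf.continuousAt (hT.mem_nhds ht))
  exact tendsto_nhds_unique_of_eventuallyEq (left_cont.tendsto.mono_left nhdsWithin_le_nhds)
    (p.continuousAt.tendsto.mono_left nhdsWithin_le_nhds) agree

theorem isRegularOn_of_continuousOn_of_eq_div (hT : IsOpen T) (hf : ContinuousOn f T) {p q : 𝕜[X]}
    (hq : q ≠ 0) (h : ∀ t ∈ T, q.eval t ≠ 0 → f t = p.eval t / q.eval t) : IsRegularOn f T := by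
  classical
  obtain ⟨p₁, q₁, hp, hq₁, coprime⟩ := extract_gcd p q
  set d := gcd p q
  have reduced : ∀ t ∈ T, q₁.eval t * f t = p₁.eval t := by
    refine fun t ht => eval_mul_eq_eval_of_eval_ne_zero hT hf hq (fun s hs hqs => ?_) ht
    have hfs := h s hs hqs
    rw [eq_div_iff hqs, hp, hq₁, Polynomial.eval_mul, Polynomial.eval_mul] at hfs
    rw [hq₁, Polynomial.eval_mul] at hqs
    exact mul_left_cancel₀ (left_ne_zero_of_mul hqs) (by linear_combination hfs)
  refine ⟨p₁, q₁, fun t ht => ⟨fun hzero => ?_, reduced t ht⟩⟩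
  obtain ⟨A, B, hAB⟩ := (gcd_isUnit_iff p₁ q₁).1 coprime
  have := congrArg (Polynomial.eval t) hAB
  simp [hzero, ← reduced t ht] at this

theorem IsRegularOn.continuousOn (hf : IsRegularOn f T) : ContinuousOn f T := by
  obtain ⟨p, q, hpq⟩ := hf
  refine ContinuousOn.congr (f := fun t => p.eval t / q.eval t)
    (p.continuousOn.div q.continuousOn fun t ht => (hpq t ht).1) fun t ht => ?_
  rw [eq_div_iff (hpq t ht).1, mul_comm, (hpq t ht).2]

end RegularFunctions

section LinearSystems

open Matrix

variable {β ι : Type*} [Fintype ι]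

theorem exists_mulVec_eq_zero_or_exists_det_submatrix_ne_zero_of_field {K : Type*} [Field K]
    [DecidableEq ι] (M : Matrix β ι K) :
    (∃ w ≠ 0, M *ᵥ w = 0) ∨ ∃ c : ι → β, (M.submatrix c id).det ≠ 0 := by
  by_cases rows_span : Submodule.span K (Set.range M.row) = ⊤
  · right
    obtain ⟨κ, a, -, span_eq, indep⟩ := exists_linearIndependent' K M.row
    let e := (Module.Basis.mk indep (by rw [span_eq, rows_span])).indexEquiv (Pi.basisFun K ι)
    refine ⟨a ∘ e.symm, ?_⟩
    have : LinearIndependent K (M.submatrix (a ∘ e.symm) id).row := indep.comp _ e.symm.injective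
    exact ((isUnit_iff_isUnit_det _).1 (linearIndependent_rows_iff_isUnit.1 this)).ne_zero
  · left
    obtain ⟨ψ, ψ_ne, hψ⟩ :=
      Submodule.exists_le_ker_of_lt_top _ (lt_top_iff_ne_top.2 rows_span)
    obtain ⟨w, rfl⟩ := (dotProductEquiv K ι).surjective ψ
    refine ⟨w, by simpa using ψ_ne, funext fun b => ?_⟩
    have : M.row b ∈ (dotProductEquiv K ι w).ker := hψ (Submodule.subset_span ⟨b, rfl⟩)
    exact (dotProduct_comm _ _).trans (LinearMap.mem_ker.1 this)

theorem exists_mulVec_eq_zero_of_map_fractionRing {R : Type*} [CommRing R] [IsDomain R]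
    (K : Type*) [Field K] [Algebra R K] [IsFractionRing R K] {M : Matrix β ι R}
    (h : ∃ w ≠ 0, M.map (algebraMap R K) *ᵥ w = 0) : ∃ w ≠ 0, M *ᵥ w = 0 := by
  obtain ⟨w, w_ne, hw⟩ := h
  obtain ⟨d, hd⟩ := IsLocalization.exist_integer_multiples_of_finite (nonZeroDivisors R) w
  choose u hu using hd
  have map_u : algebraMap R K ∘ u = (d : R) • w := funext hu
  refine ⟨u, ?_, funext fun b => IsFractionRing.injective R K ?_⟩
  · rintro rfl
    have smul_w : (d : R) • w = 0 := by rw [← map_u]; ext; simp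
    exact w_ne ((smul_eq_zero.1 smul_w).resolve_left (nonZeroDivisors.coe_ne_zero d))
  · rw [RingHom.map_mulVec, map_u, mulVec_smul, hw]
    simp

theorem exists_mulVec_eq_zero_or_exists_det_submatrix_ne_zero {R : Type*} [CommRing R] [IsDomain R]
    [DecidableEq ι] (M : Matrix β ι R) :
    (∃ w ≠ 0, M *ᵥ w = 0) ∨ ∃ c : ι → β, (M.submatrix c id).det ≠ 0 := by
  refine (exists_mulVec_eq_zero_or_exists_det_submatrix_ne_zero_of_field
    (M.map (algebraMap R (FractionRing R)))).imp (exists_mulVec_eq_zero_of_map_fractionRing _) ?_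
  rintro ⟨c, hc⟩
  refine ⟨c, fun det_eq => hc ?_⟩
  rw [submatrix_map, ← RingHom.mapMatrix_apply, ← RingHom.map_det, det_eq, map_zero]

theorem exists_mulVec_eq_zero_of_infinite {R : Type*} [CommRing R] [IsDomain R]
    (M : Matrix β ι R[X]) {A : Set R} (hA : A.Infinite)
    (h : ∀ a ∈ A, ∃ w ≠ 0, M.map (Polynomial.evalRingHom a) *ᵥ w = 0) :
    ∃ w ≠ 0, M *ᵥ w = 0 := by
  classical
  refine (exists_mulVec_eq_zero_or_exists_det_submatrix_ne_zero M).resolve_right ?_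
  rintro ⟨c, det_ne⟩
  refine det_ne (Polynomial.eq_zero_of_infinite_isRoot _ (hA.mono fun a ha => ?_))
  obtain ⟨w, w_ne, hw⟩ := h a ha
  have : ((Polynomial.evalRingHom a).mapMatrix (M.submatrix c id)).det = 0 :=
    exists_mulVec_eq_zero_iff.1 ⟨w, w_ne, funext fun j => congrFun hw (c j)⟩
  rwa [← RingHom.map_det] at this

end LinearSystems

section CoefficientVectors

variable {σ R : Type*} [CommSemiring R]

/-- The polynomial with prescribed coefficients on a finite set `S` of exponents. It turns solutions
of linear systems into polynomials. -/
noncomputable def ofCoeffs (S : Finset (σ →₀ ℕ)) (w : S → R) : MvPolynomial σ R :=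
  ∑ m, monomial m.1 (w m)

theorem ofCoeffs_coeff {S : Finset (σ →₀ ℕ)} {P : MvPolynomial σ R} (hP : P.support ⊆ S) :
    ofCoeffs S (fun m => P.coeff m) = P := by
  rw [ofCoeffs, Finset.sum_coe_sort S fun m => monomial m (P.coeff m)]
  conv_rhs => rw [P.as_sum]
  exact (Finset.sum_subset hP fun m _ hm => by simp [notMem_support_iff.1 hm]).symm

theorem ofCoeffs_eq_zero_iff {S : Finset (σ →₀ ℕ)} {w : S → R} : ofCoeffs S w = 0 ↔ w = 0 := by
  classical
  refine ⟨fun h => funext fun m => ?_, fun h => by simp [h, ofCoeffs]⟩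
  simpa [ofCoeffs, coeff_sum, coeff_monomial, Subtype.val_inj] using congrArg (coeff m.1) h

theorem eval_ofCoeffs (S : Finset (σ →₀ ℕ)) (w : S → R) (b : σ → R) :
    eval b (ofCoeffs S w) = ∑ m, eval b (monomial m.1 1) * w m := by
  simp [ofCoeffs, eval_monomial, mul_comm]

end CoefficientVectors

section Boxes

theorem eval_eval_C_comp {σ R : Type*} [CommSemiring R] (P : MvPolynomial σ R[X]) (a : R)
    (b : σ → R) : (eval (Polynomial.C ∘ b) P).eval a =
      eval b (map (Polynomial.evalRingHom a) P) := by
  induction P using MvPolynomial.induction_on with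
  | C p => simp
  | add p q hp hq => simp [hp, hq]
  | mul_X p i hp => simp [hp]

theorem exists_mul_eval_eq_mul_eval_of_infinite {σ β R : Type*} [CommRing R] [IsDomain R]
    (p q : β → R[X]) (b : β → σ → R) (S : Finset (σ →₀ ℕ)) {A : Set R} (hA : A.Infinite)
    (h : ∀ a ∈ A, ∃ P Q : MvPolynomial σ R, P.support ⊆ S ∧ Q.support ⊆ S ∧ Q ≠ 0 ∧
      ∀ j, (q j).eval a * eval (b j) P = (p j).eval a * eval (b j) Q) :
    ∃ P Q : MvPolynomial σ R[X], (P ≠ 0 ∨ Q ≠ 0) ∧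
      ∀ j, q j * eval (Polynomial.C ∘ b j) P = p j * eval (Polynomial.C ∘ b j) Q := by
  let M : Matrix β (S ⊕ S) R[X] := Matrix.of fun j => Sum.elim
    (fun m => q j * eval (Polynomial.C ∘ b j) (monomial m.1 1))
    (fun m => -(p j * eval (Polynomial.C ∘ b j) (monomial m.1 1)))
  obtain ⟨w, w_ne, hw⟩ := exists_mulVec_eq_zero_of_infinite M hA fun a ha => by
    obtain ⟨P, Q, hP, hQ, Q_ne, hPQ⟩ := h a ha
    refine ⟨Sum.elim (fun m => P.coeff m) (fun m => Q.coeff m), fun hzero => Q_ne ?_,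
      funext fun j => ?_⟩
    · rw [← ofCoeffs_coeff hQ, ofCoeffs_eq_zero_iff]
      exact funext fun m => congrFun hzero (Sum.inr m)
    · have := sub_eq_zero.2 (hPQ j)
      rw [← ofCoeffs_coeff hP, ← ofCoeffs_coeff hQ, eval_ofCoeffs, eval_ofCoeffs] at this
      simpa [M, Matrix.mulVec, dotProduct, eval_eval_C_comp, mul_assoc, ← Finset.mul_sum,
        ← sub_eq_add_neg] using this
  refine ⟨ofCoeffs S (w ∘ Sum.inl), ofCoeffs S (w ∘ Sum.inr), ?_, fun j => sub_eq_zero.1 ?_⟩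
  · contrapose! w_ne
    simp only [ofCoeffs_eq_zero_iff] at w_ne
    rw [← Sum.elim_comp_inl_inr w, w_ne.1, w_ne.2, Sum.elim_zero_zero]
  · have := congrFun hw j
    simpa [M, Matrix.mulVec, dotProduct, eval_ofCoeffs, mul_assoc, ← Finset.mul_sum,
      ← sub_eq_add_neg] using this

theorem exists_infinite_setOf_eq_of_not_countable {α γ : Type*} [Countable γ] {A : Set α}
    (hA : ¬ A.Countable) (s : α → γ) : ∃ c, {a ∈ A | s a = c}.Infinite := by
  by_contra! fibers_finite
  have cover : A ⊆ ⋃ c, {a ∈ A | s a = c} := fun a ha => Set.mem_iUnion.2 ⟨s a, ha, rfl⟩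
  exact hA ((Set.countable_iUnion fun c => (fibers_finite c).countable).mono cover)

/-- `f` is a rational function on `S`. The denominator is cleared, so that the values of `f` at its
zeros are unconstrained. -/
def IsRationalOn {σ 𝕜 : Type*} [Field 𝕜] (f : (σ → 𝕜) → 𝕜) (S : Set (σ → 𝕜)) : Prop :=
  ∃ P Q : MvPolynomial σ 𝕜, Q ≠ 0 ∧ ∀ x ∈ S, eval x Q * f x = eval x P

theorem exists_eval_map_mul_eq_of_isRegularOn_of_isRationalOn {σ 𝕜 : Type*} [Countable σ] [Field 𝕜]
    {A : Set 𝕜} (hA : ¬ A.Countable) {B : Set (σ → 𝕜)}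
    (hB : ∀ P : MvPolynomial σ 𝕜, (∀ b ∈ B, eval b P = 0) → P = 0) {f : 𝕜 → (σ → 𝕜) → 𝕜}
    (hreg : ∀ b ∈ B, IsRegularOn (f · b) A) (hrat : ∀ a ∈ A, IsRationalOn (f a) B) :
    ∃ P Q : MvPolynomial σ 𝕜[X], Q ≠ 0 ∧ ∀ a ∈ A, ∀ b ∈ B,
      eval b (map (Polynomial.evalRingHom a) Q) * f a b =
        eval b (map (Polynomial.evalRingHom a) P) := by
  classical
  choose! p q hpq using hreg
  choose! Pa Qa Qa_ne hPQa using hrat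
  obtain ⟨S, hS⟩ := exists_infinite_setOf_eq_of_not_countable hA
    fun a => (Pa a).support ∪ (Qa a).support
  obtain ⟨P, Q, PQ_ne, hPQ⟩ := exists_mul_eval_eq_mul_eval_of_infinite (fun b : B => p b)
    (fun b => q b) (fun b => b) S hS fun a ha =>
      ⟨Pa a, Qa a, ha.2 ▸ Finset.subset_union_left, ha.2 ▸ Finset.subset_union_right,
        Qa_ne a ha.1, fun b => by rw [← hPQa a ha.1 b b.2, ← (hpq b b.2 a ha.1).2]; ring⟩
  have eval_eq : ∀ a ∈ A, ∀ b ∈ B, eval b (map (Polynomial.evalRingHom a) Q) * f a b =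
      eval b (map (Polynomial.evalRingHom a) P) := by
    intro a ha b hb
    obtain ⟨q_ne, hqf⟩ := hpq b hb a ha
    have := congrArg (Polynomial.eval a) (hPQ ⟨b, hb⟩)
    rw [Polynomial.eval_mul, Polynomial.eval_mul, eval_eval_C_comp, eval_eval_C_comp, ← hqf] at this
    exact mul_left_cancel₀ q_ne (by linear_combination -this)
  refine ⟨P, Q, fun Q_eq => ?_, eval_eq⟩
  have P_eq : P = 0 := by
    ext1 m
    refine Polynomial.eq_zero_of_infinite_isRoot _ (Set.Infinite.mono (fun a ha => ?_)
      (fun hfin : A.Finite => hA hfin.countable))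
    have map_P : map (Polynomial.evalRingHom a) P = 0 :=
      hB _ fun b hb => by simp [← eval_eq a ha b hb, Q_eq]
    simpa [coeff_map] using congrArg (coeff m) map_P
  simp [P_eq, Q_eq] at PQ_ne

/-- Polynomials in `n + 1` variables as polynomials in the last `n` variables whose coefficients are
polynomials in the first one (`MvPolynomial.finSuccEquiv` nests them the other way round). -/
noncomputable def finSuccEquivRight (n : ℕ) (R : Type*) [CommSemiring R] :
    MvPolynomial (Fin (n + 1)) R ≃ₐ[R] MvPolynomial (Fin n) R[X] :=
  (renameEquiv R (_root_.finSuccEquiv n)).trans (optionEquivRight R (Fin n))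

theorem eval_map_finSuccEquivRight {n : ℕ} {R : Type*} [CommSemiring R]
    (P : MvPolynomial (Fin (n + 1)) R) (a : R) (b : Fin n → R) :
    eval b (map (Polynomial.evalRingHom a) (finSuccEquivRight n R P)) =
      eval (Fin.cons a b : Fin (n + 1) → R) P := by
  induction P using MvPolynomial.induction_on with
  | C r => simp [finSuccEquivRight]
  | add P Q hP hQ => simp [hP, hQ]
  | mul_X P i hP =>
    rw [map_mul, map_mul, map_mul, map_mul, hP, eval_X]
    congr 1
    cases i using Fin.cases <;> simp [finSuccEquivRight]

theorem isRationalOn_pi_of_forall_isRegularOn_update {𝕜 : Type*} [Field 𝕜] {n : ℕ}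
    {A : Fin n → Set 𝕜} (hA : ∀ i, ¬ (A i).Countable) {f : (Fin n → 𝕜) → 𝕜}
    (hf : ∀ x ∈ Set.univ.pi A, ∀ i, IsRegularOn (fun t => f (Function.update x i t)) (A i)) :
    IsRationalOn f (Set.univ.pi A) := by
  induction n with
  | zero => exact ⟨C (f default), 1, one_ne_zero, fun x _ => by simp [Subsingleton.elim x default]⟩
  | succ n ih =>
    let B : Set (Fin n → 𝕜) := Set.univ.pi fun i => A i.succ
    have infinite (i : Fin (n + 1)) : (A i).Infinite := fun hfin => hA i hfin.countable
    have cons_mem {a : 𝕜} (ha : a ∈ A 0) {b : Fin n → 𝕜} (hb : b ∈ B) :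
        (Fin.cons a b : Fin (n + 1) → 𝕜) ∈ Set.univ.pi A :=
      fun i _ => Fin.cases ha (fun j => hb j trivial) i
    have rational_on_slice : ∀ a ∈ A 0, IsRationalOn (fun b => f (Fin.cons a b)) B :=
      fun a ha => ih (fun i => hA i.succ) fun b hb i => by
        simpa only [← Fin.cons_update] using hf _ (cons_mem ha hb) i.succ
    have regular_in_first : ∀ b ∈ B, IsRegularOn (fun a => f (Fin.cons a b)) (A 0) := by
      intro b hb
      obtain ⟨a, ha⟩ := (infinite 0).nonempty
      simpa only [Fin.update_cons_zero] using hf _ (cons_mem ha hb) 0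
    obtain ⟨P, Q, Q_ne, hPQ⟩ := exists_eval_map_mul_eq_of_isRegularOn_of_isRationalOn (hA 0)
      (fun P hP => MvPolynomial.funext_set _ (fun i => infinite i.succ) fun b hb => by
        rw [hP b hb, map_zero])
      regular_in_first rational_on_slice
    refine ⟨(finSuccEquivRight n 𝕜).symm P, (finSuccEquivRight n 𝕜).symm Q, by simpa, ?_⟩
    intro x hx
    have := hPQ (x 0) (hx 0 trivial) (Fin.tail x) fun i _ => hx i.succ trivial
    rw [← (finSuccEquivRight n 𝕜).apply_symm_apply P, ← (finSuccEquivRight n 𝕜).apply_symm_apply Q,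
      eval_map_finSuccEquivRight, eval_map_finSuccEquivRight, Fin.cons_self_tail] at this
    exact this

end Boxes

section RegularOnLines

/-- The restriction of `f` to `ℓ ∩ U` is a regular function of the parameter of `ℓ`, for every
parametrized line `ℓ`. -/
def IsRegularOnLines {σ 𝕜 : Type*} [Field 𝕜] (f : (σ → 𝕜) → 𝕜) (U : Set (σ → 𝕜)) : Prop :=
  ∀ x v : σ → 𝕜, IsRegularOn (fun t => f (x + t • v)) {t | x + t • v ∈ U}

variable {σ 𝕜 : Type*} [NontriviallyNormedField 𝕜] {f : (σ → 𝕜) → 𝕜} {U V : Set (σ → 𝕜)}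

theorem IsRegularOnLines.isRationalOn_of_subset (hf : IsRegularOnLines f U) (hV : IsOpen V)
    (hne : V.Nonempty) (hVU : V ⊆ U) (hrat : IsRationalOn f V) : IsRationalOn f U := by
  obtain ⟨P, Q, Q_ne, hPQ⟩ := hrat
  obtain ⟨c, hc⟩ := hne
  refine ⟨P, Q, Q_ne, fun x hx => ?_⟩
  let toLine : MvPolynomial σ 𝕜 →ₐ[𝕜] 𝕜[X] := lineRestrict c (x - c)
  obtain ⟨p, q, hpq⟩ := hf c (x - c)
  have infinite_params : {t : 𝕜 | c + t • (x - c) ∈ V}.Infinite :=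
    infinite_of_mem_nhds 0 ((hV.preimage (by fun_prop)).mem_nhds (by simpa using hc))
  have poly_eq : q * toLine P = p * toLine Q := by
    refine Polynomial.eq_of_infinite_eval_eq _ _ (infinite_params.mono fun t ht => ?_)
    have hqf := (hpq t (hVU ht)).2
    have hQf := hPQ _ ht
    simp only [Set.mem_ofPred_eq, Polynomial.eval_mul, toLine, eval_lineRestrict]
    linear_combination eval (c + t • (x - c)) Q * hqf - q.eval t * hQf
  have param_one : c + (1 : 𝕜) • (x - c) = x := by simp
  obtain ⟨q_ne, hqf⟩ := hpq 1 (by simpa using hx)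
  have eval_one := congrArg (Polynomial.eval 1) poly_eq
  simp only [Polynomial.eval_mul, toLine, eval_lineRestrict, param_one] at eval_one hqf
  exact mul_left_cancel₀ q_ne (by linear_combination eval x Q * hqf - eval_one)

theorem IsRegularOnLines.frequently_eval_ne_zero (hf : IsRegularOnLines f U) (hU : IsOpen U)
    {Q : MvPolynomial σ 𝕜} (hQ : Q ≠ 0) {x : σ → 𝕜} (hx : x ∈ U) {O : Set 𝕜} (hO : O ∈ 𝓝 (f x)) :
    ∃ᶠ y in 𝓝 x, y ∈ U ∧ eval y Q ≠ 0 ∧ f y ∈ O := by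
  have : Infinite 𝕜 := Set.infinite_univ_iff.1 (infinite_of_mem_nhds (0 : 𝕜) univ_mem)
  obtain ⟨z, hz⟩ : ∃ z, eval z Q ≠ 0 := by
    contrapose! hQ
    exact MvPolynomial.funext (by simpa using hQ)
  have Q_ne : lineRestrict x (z - x) Q ≠ 0 := fun hzero => hz <| by
    simpa [hzero] using (eval_lineRestrict x (z - x) Q 1).symm
  have line_cont : Continuous fun t : 𝕜 => x + t • (z - x) := by fun_prop
  have mem_U : {t : 𝕜 | x + t • (z - x) ∈ U} ∈ 𝓝 0 :=
    (hU.preimage line_cont).mem_nhds (by simpa using hx)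
  have mem_O : ∀ᶠ t in 𝓝 (0 : 𝕜), f (x + t • (z - x)) ∈ O :=
    ((hf x (z - x)).continuousOn.continuousAt mem_U).eventually_mem (by simpa using hO)
  have line_tendsto : Tendsto (fun t : 𝕜 => x + t • (z - x)) (𝓝[≠] 0) (𝓝 x) := by
    simpa using (line_cont.tendsto 0).mono_left nhdsWithin_le_nhds
  refine line_tendsto.frequently (Eventually.frequently ?_)
  filter_upwards [nhdsWithin_le_nhds mem_U, nhdsWithin_le_nhds mem_O,
    eventually_eval_ne_zero Q_ne 0] with t htU htO htQ
  exact ⟨htU, by rwa [eval_lineRestrict] at htQ, htO⟩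

theorem IsRegularOnLines.isRationalOn {n : ℕ} {f : (Fin n → ℝ) → ℝ} {U : Set (Fin n → ℝ)}
    (hf : IsRegularOnLines f U) (hU : IsOpen U) (hne : U.Nonempty) : IsRationalOn f U := by
  obtain ⟨x₀, hx₀⟩ := hne
  obtain ⟨r, hr, hball⟩ := Metric.isOpen_iff.1 hU x₀ hx₀
  rw [ball_pi x₀ hr] at hball
  refine hf.isRationalOn_of_subset (isOpen_set_pi Set.finite_univ fun i _ => Metric.isOpen_ball)
    ⟨x₀, fun i _ => Metric.mem_ball_self hr⟩ hball ?_
  refine isRationalOn_pi_of_forall_isRegularOn_update (fun i hcount => ?_) fun x hx i => ?_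
  · rw [Real.ball_eq_Ioo, Cardinal.Real.Ioo_countable_iff] at hcount
    linarith
  · have update_eq (t : ℝ) :
        Function.update x i 0 + t • Pi.single i 1 = Function.update x i t := by
      ext j
      rcases eq_or_ne j i with rfl | hj <;> simp [*]
    have regular := hf (Function.update x i 0) (Pi.single i 1)
    simp only [update_eq] at regular
    refine regular.mono fun t ht => hball ?_
    exact (Set.update_mem_pi_iff_of_mem hx).2 fun _ => ht

end RegularOnLines

section Continuity

theorem exists_frequently_lt_dist_of_not_continuousAt {X Y : Type*} [TopologicalSpace X]
    [PseudoMetricSpace Y] {f : X → Y} {x₀ : X} (h : ¬ ContinuousAt f x₀) :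
    ∃ ε > 0, ∃ᶠ x in 𝓝 x₀, ε < dist (f x) (f x₀) := by
  rw [ContinuousAt, Metric.tendsto_nhds] at h
  push Not at h
  obtain ⟨ε, hε, far⟩ := h
  exact ⟨ε / 2, half_pos hε, far.mono fun x hx => (half_lt_self hε).trans_le hx⟩

variable {n : ℕ} {U : Set (Fin n → ℝ)} {f : (Fin n → ℝ) → ℝ}

theorem isRegularOnLines_of_continuousOn_curves (hU : IsOpen U)
    (hcurve : ∀ I : Ideal (MvPolynomial (Fin n) ℝ), I.IsPrime →
      ringKrullDim (MvPolynomial (Fin n) ℝ ⧸ I) = 1 → ContinuousOn f (U ∩ realPoints I))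
    (hline : ∀ x v : Fin n → ℝ, v ≠ 0 → ∃ p q : ℝ[X], q ≠ 0 ∧
      ∀ t, x + t • v ∈ U → q.eval t ≠ 0 → f (x + t • v) = p.eval t / q.eval t) :
    IsRegularOnLines f U := by
  intro x v
  obtain rfl | hv := eq_or_ne v 0
  · simpa using isRegularOn_const (f x) _
  have line_cont : Continuous fun t : ℝ => x + t • v := by fun_prop
  obtain ⟨p, q, q_ne, hpq⟩ := hline x v hv
  refine isRegularOn_of_continuousOn_of_eq_div (hU.preimage line_cont) ?_ q_ne hpq
  exact (hcurve _ (RingHom.ker_isPrime _) (ringKrullDim_quotient_ker_lineRestrict x hv)).comp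
    line_cont.continuousOn fun t ht => ⟨ht, mem_realPoints_ker_lineRestrict x v t⟩

theorem continuousOn_of_continuousOn_curves (hU : IsOpen U)
    (hcurve : ∀ I : Ideal (MvPolynomial (Fin n) ℝ), I.IsPrime →
      ringKrullDim (MvPolynomial (Fin n) ℝ ⧸ I) = 1 → ContinuousOn f (U ∩ realPoints I))
    (hf : IsRegularOnLines f U) (hrat : IsRationalOn f U) : ContinuousOn f U := by
  obtain ⟨P, Q, Q_ne, hPQ⟩ := hrat
  intro x₀ hx₀
  by_contra not_cont
  obtain ⟨ε, hε, far⟩ := exists_frequently_lt_dist_of_not_continuousAt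
    fun hcont : ContinuousAt f x₀ => not_cont hcont.continuousWithinAt
  let g : MvPolynomial (Fin n) ℝ := (P - C (f x₀) * Q) ^ 2 - C (ε ^ 2) * Q ^ 2
  have eval_g {y : Fin n → ℝ} (hy : y ∈ U) :
      eval y g = eval y Q ^ 2 * ((f y - f x₀) ^ 2 - ε ^ 2) := by
    simp only [g, map_sub, map_pow, map_mul, eval_C, ← hPQ y hy]
    ring
  have g_pos_iff {y : Fin n → ℝ} (hy : y ∈ U) :
      0 < eval y g ↔ eval y Q ≠ 0 ∧ ε < |f y - f x₀| := by
    obtain hQy | hQy := eq_or_ne (eval y Q) 0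
    · simp [eval_g hy, hQy]
    · rw [eval_g hy, mul_pos_iff_of_pos_left (by positivity), sub_pos, sq_lt_sq, abs_of_pos hε]
      simp [hQy]
  have g_pos : ∃ᶠ y in 𝓝 x₀, 0 < eval y g := by
    have far_in_U := far.and_eventually (hU.mem_nhds hx₀)
    refine frequently_frequently_nhds.1 (far_in_U.mono fun x ⟨hfx, hx⟩ => ?_)
    have hO : {s : ℝ | ε < |s - f x₀|} ∈ 𝓝 (f x) :=
      (isOpen_lt continuous_const (by fun_prop)).mem_nhds hfx
    exact (hf.frequently_eval_ne_zero hU Q_ne hx hO).mono fun y ⟨hy, hQy, hfy⟩ =>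
      (g_pos_iff hy).2 ⟨hQy, hfy⟩
  obtain ⟨I, hI, hdim, hx₀I, g_pos_on_curve⟩ :=
    exists_curve_frequently_pos g (by simpa [eval_g hx₀] using by positivity) g_pos
  have near_on_curve : ∀ᶠ x in 𝓝 x₀, x ∈ U ∩ realPoints I → |f x - f x₀| < ε :=
    eventually_nhdsWithin_iff.1
      (Metric.tendsto_nhds.1 (hcurve I hI hdim x₀ ⟨hx₀, hx₀I⟩) ε hε)
  obtain ⟨x, ⟨hxI, hgx⟩, near, hxU⟩ :=
    (g_pos_on_curve.and_eventually (near_on_curve.and (hU.mem_nhds hx₀))).exists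
  exact (near ⟨hxU, hxI⟩).not_gt ((g_pos_iff hxU).1 hgx).2

theorem continuous_and_rational_of_curveRational_general (hU : IsOpen U) (hne : U.Nonempty)
    (hcurve : ∀ I : Ideal (MvPolynomial (Fin n) ℝ), I.IsPrime →
      ringKrullDim (MvPolynomial (Fin n) ℝ ⧸ I) = 1 → ContinuousOn f (U ∩ realPoints I))
    (hline : ∀ x v : Fin n → ℝ, v ≠ 0 → ∃ p q : ℝ[X], q ≠ 0 ∧
      ∀ t, x + t • v ∈ U → q.eval t ≠ 0 → f (x + t • v) = p.eval t / q.eval t) :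
    ContinuousOn f U ∧
    ∃ p q : MvPolynomial (Fin n) ℝ, q ≠ 0 ∧
      ∀ x ∈ U, eval x q ≠ 0 → f x = eval x p / eval x q := by
  have hf : IsRegularOnLines f U := isRegularOnLines_of_continuousOn_curves hU hcurve hline
  have hrat : IsRationalOn f U := hf.isRationalOn hU hne
  refine ⟨continuousOn_of_continuousOn_curves hU hcurve hf hrat, ?_⟩
  obtain ⟨P, Q, Q_ne, hPQ⟩ := hrat
  refine ⟨P, Q, Q_ne, fun x hx hQx => ?_⟩
  rw [eq_div_iff hQx, mul_comm, hPQ x hx]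

end Continuity

/-- **Theorem 1.7** (main implication, for open subsets of `ℝⁿ`). A curve-rational
function on a nonempty open set `U ⊆ ℝⁿ` is continuous and rational. -/
theorem continuous_and_rational_of_curveRational
    (n : ℕ) (U : Set (Fin n → ℝ)) (hU : IsOpen U) (hne : U.Nonempty)
    (f : (Fin n → ℝ) → ℝ) (hf : CurveRational U f) :
    ContinuousOn f U ∧
    ∃ p q : MvPolynomial (Fin n) ℝ, q ≠ 0 ∧
      ∀ x ∈ U, eval x q ≠ 0 → f x = eval x p / eval x q :=
  continuous_and_rational_of_curveRational_general hU hne (fun I hI hdim => (hf I hI hdim).1)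
    (exists_eq_div_on_line_of_curveRational hf)
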